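/- arXiv:1309.3675 — 15 statements merged into one kernel-verified Lean document; each statement's English description precedes it below -/
import Mathlib

section
/- For all real numbers x, y with x ≥ 0, y ≥ 0 and x + y ≤ 1, one has (1 − x/2)^2 · exp(−y) + (2/e)·x + (3/(2e))·y ≤ 1. -/
theorem stmt_0 (x y : ℝ) (hx : 0 ≤ x) (hy : 0 ≤ y) (hxy : x + y ≤ 1) :
    (1 - x / 2) ^ 2 * Real.exp (-y) + (2 / Real.exp 1) * x + (3 / (2 * Real.exp 1)) * y ≤ 1 := by
  have he1 := Real.exp_one_gt_d9
  have he0 : (0:ℝ) < Real.exp 1 := Real.exp_pos 1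
  obtain ⟨c, hc⟩ : ∃ c : ℝ, c = 1 / Real.exp 1 := ⟨_, rfl⟩
  have hc1 : c ≤ 0.36788 := by
    rw [hc, div_le_iff₀ he0]; linarith
  have r1 : 2 / Real.exp 1 = 2 * c := by rw [hc]; ring
  have r2 : 3 / (2 * Real.exp 1) = 3 / 2 * c := by rw [hc]; field_simp
  rw [r1, r2]
  have hP : 1 + y + y ^ 2 / 2 + y ^ 3 / 6 ≤ Real.exp y := by
    have := Real.sum_le_exp_of_nonneg hy 4
    simp [Finset.sum_range_succ, Nat.factorial] at this
    linarith
  have hE0 := Real.exp_pos (-y)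
  have hEm : Real.exp (-y) * Real.exp y = 1 := by rw [← Real.exp_add]; simp
  generalize Real.exp (-y) = E at *
  have hEP : E * (1 + y + y ^ 2 / 2 + y ^ 3 / 6) ≤ 1 := by
    exact (mul_le_mul_of_nonneg_left hP hE0.le).trans hEm.le
  have hy1 : y ≤ 1 := by linarith
  have hPp : 0 < 1 + y + y ^ 2 / 2 + y ^ 3 / 6 := by positivity
  have hE : E ≤ 1 / (1 + y + y ^ 2 / 2 + y ^ 3 / 6) := by
    rw [le_div_iff₀ hPp]; exact hEP
  have y2 : y ^ 2 ≤ y := by nlinarith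
  have y3 : y ^ 3 ≤ y ^ 2 := by nlinarith [sq_nonneg y]
  have y4 : y ^ 4 ≤ y ^ 3 := by nlinarith [pow_nonneg hy 3]
  have g0 : E + 3 / 2 * c * y ≤ 1 := by
    have : 1 / (1 + y + y ^ 2 / 2 + y ^ 3 / 6) ≤ 1 - 0.55182 * y := by
      rw [div_le_iff₀ hPp]
      nlinarith [pow_nonneg hy 3]
    nlinarith
  have g1 : (1 + y) ^ 2 / 4 * E + 2 * c * (1 - y) + 3 / 2 * c * y ≤ 1 := by
    have h : (1 + y) ^ 2 / 4 * E ≤ 0.26424 + 0.18394 * y := by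
      have h1 : (1 + y) ^ 2 / 4 * E ≤ (1 + y) ^ 2 / 4 * (1 / (1 + y + y ^ 2 / 2 + y ^ 3 / 6)) :=
        mul_le_mul_of_nonneg_left hE (by positivity)
      refine h1.trans ?_
      rw [mul_one_div, div_le_iff₀ hPp]
      nlinarith [pow_nonneg hy 3, pow_nonneg hy 4, sq_nonneg (y - 1/4), mul_nonneg hy (sq_nonneg (y - 1/4))]
    nlinarith
  rcases eq_or_lt_of_le hy1 with h | h
  · have : x = 0 := by linarith
    subst this
    linarith
  · have k1 := mul_nonneg (sub_nonneg.2 hxy) (sub_nonneg.2 g0)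
    have k2 := mul_nonneg hx (sub_nonneg.2 g1)
    have k3 : 0 ≤ x * (1 - (x + y)) * E * (1 - y) := by
      have : 0 ≤ 1 - (x + y) := by linarith
      have : 0 ≤ 1 - y := by linarith
      positivity
    have h' : 0 < 1 - y := by linarith
    refine le_of_mul_le_mul_left ?_ h'
    linarith
end

section
/- Let η₁, η₃ ∈ [0,1] and η₂ ≥ 0 be real numbers. Define z^m := min(η₂, 1) and z^b := min(η₁ + η₂ + η₃, 1) − z^m. Then (η₁ + η₃ − η₁·η₃) · exp(−z^m) + 1 − exp(−z^m) ≥ (2/e)·z^b + (3/(2e))·z^m. -/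
lemma poly_aux (m b : ℝ) (hm : 0 ≤ m) (hb : 0 ≤ b) (hs : m + b ≤ 1) :
    (1 - b/2)^2 ≤ (1 + m + m^2/2) * (1 - (2*b + 3/2*m) * 0.36788) := by
  have h0 : 0 ≤ (1 + m + m^2/2) * (1 - (3/2*m) * 0.36788) - 1 := by
    have : (1 + m + m^2/2) * (1 - (3/2*m) * 0.36788) - 1
      = m * (0.44818 - 0.05182 * m - 0.27591 * m^2) := by ring
    rw [this]
    apply mul_nonneg hm
    nlinarith
  have h1 : 0 ≤ (1 + m + m^2/2) * (1 - (2*(1-m) + 3/2*m) * 0.36788) - (1 - (1-m)/2)^2 := by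
    have : (1 + m + m^2/2) * (1 - (2*(1-m) + 3/2*m) * 0.36788) - (1 - (1-m)/2)^2
      = 0.01424 - 0.05182*m + 0.06606*m^2 + 0.09197*m^3 := by ring
    rw [this]
    nlinarith [mul_nonneg hm (sq_nonneg (m - 1/4)), sq_nonneg (m-1/4)]
  rcases eq_or_lt_of_le (show m ≤ 1 by linarith) with h | h
  · have : b = 0 := by linarith
    subst this; subst h; norm_num
  · have hB : 0 < 1 - m := by linarith
    have h2 := mul_nonneg hb h1
    have h3 := mul_nonneg (show 0 ≤ 1 - m - b by linarith) h0
    have h4 := mul_nonneg (mul_nonneg hb (show 0 ≤ 1 - m - b by linarith)) hB.le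
    rw [← sub_nonneg]
    refine nonneg_of_mul_nonneg_right ?_ hB
    linarith

theorem stmt_1 (η₁ η₂ η₃ : ℝ) (h₁ : η₁ ∈ Set.Icc (0:ℝ) 1) (h₃ : η₃ ∈ Set.Icc (0:ℝ) 1)
    (h₂ : 0 ≤ η₂) (zm zb : ℝ) (hzm : zm = min η₂ 1)
    (hzb : zb = min (η₁ + η₂ + η₃) 1 - zm) :
    (η₁ + η₃ - η₁ * η₃) * Real.exp (-zm) + 1 - Real.exp (-zm) ≥
      (2 / Real.exp 1) * zb + (3 / (2 * Real.exp 1)) * zm := by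
  obtain ⟨a0, a1⟩ := h₁
  obtain ⟨c0, c1⟩ := h₃
  have hm : 0 ≤ zm := by rw [hzm]; exact le_min h₂ zero_le_one
  have hb : 0 ≤ zb := by
    rw [hzb, hzm, sub_nonneg]; exact min_le_min (by linarith) le_rfl
  have hs : zm + zb ≤ 1 := by
    rw [hzb]; linarith [min_le_right (η₁ + η₂ + η₃) 1]
  have hbs : zb ≤ η₁ + η₃ := by
    rw [hzb, hzm]
    rcases le_total η₂ 1 with h | h
    · rw [min_eq_left h]; linarith [min_le_left (η₁ + η₂ + η₃) 1]
    · rw [min_eq_right h]; linarith [min_le_right (η₁ + η₂ + η₃) 1]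
  have hp := poly_aux zm zb hm hb hs
  have hc : (Real.exp 1)⁻¹ ≤ 0.36788 := by
    rw [inv_le_comm₀ (Real.exp_pos 1) (by norm_num)]
    refine le_trans ?_ Real.exp_one_gt_d9.le
    norm_num
  have hX := Real.quadratic_le_exp_of_nonneg hm
  have hE : Real.exp (-zm) * Real.exp zm = 1 := by rw [← Real.exp_add]; simp
  have hE0 := Real.exp_pos (-zm)
  have hprod : (1-η₁)*(1-η₃) ≤ (1 - zb/2)^2 := by
    have : (1 - (η₁+η₃)/2)^2 ≤ (1 - zb/2)^2 :=
      pow_le_pow_left₀ (by linarith) (by linarith) 2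
    nlinarith [sq_nonneg (η₁ - η₃)]
  have e1 : (2 / Real.exp 1) * zb + (3 / (2 * Real.exp 1)) * zm
      = (2*zb + 3/2*zm) * (Real.exp 1)⁻¹ := by
    field_simp
  rw [e1]
  have hk : (2*zb + 3/2*zm) * (Real.exp 1)⁻¹ ≤ (2*zb + 3/2*zm) * 0.36788 :=
    mul_le_mul_of_nonneg_left hc (by positivity)
  have hk0 : 0 ≤ 1 - (2*zb + 3/2*zm) * 0.36788 := by linarith
  have h5 := hprod.trans (hp.trans (mul_le_mul_of_nonneg_right hX hk0))
  have h6 := mul_le_mul_of_nonneg_left h5 hE0.le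
  rw [← mul_assoc _ (Real.exp zm), hE, one_mul] at h6
  linarith
end

section
/- For every real x ∈ [0,1], one has (x/2 − 1)^2 · exp(x − 1) + x/(2e) + 3/(2e) ≤ 1. -/
theorem stmt_2 (x : ℝ) (hx : x ∈ Set.Icc (0:ℝ) 1) :
    (x / 2 - 1) ^ 2 * Real.exp (x - 1) + x / (2 * Real.exp 1) + 3 / (2 * Real.exp 1) ≤ 1 := by
  obtain ⟨h0, h1⟩ := hx
  have hb := Real.exp_bound' h0 h1 (n := 4) (by norm_num)
  norm_num [Finset.sum_range_succ, Nat.factorial] at hb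
  have he := Real.exp_one_gt_d9
  have hp : (x / 2 - 1) ^ 2 * (1 + x + x^2/2 + x^3/6 + x^4*5/96) + x/2 + 3/2 ≤ 2.7182 := by
    have h3 : 0 ≤ x * (x - 3/4)^2 := by positivity
    have h4 : 0 ≤ x^4 * (1 - x) := mul_nonneg (by positivity) (by linarith)
    have h5 : 0 ≤ x^2 * (1 - x) := mul_nonneg (by positivity) (by linarith)
    have h6 : 0 ≤ x^3 * (1 - x) := mul_nonneg (by positivity) (by linarith)
    have h7 : 0 ≤ x^5 * (1 - x) := mul_nonneg (by positivity) (by linarith)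
    nlinarith [sq_nonneg (x - 3/4), sq_nonneg (x*(x-3/4)), sq_nonneg (x^2*(x-3/4)),
      mul_nonneg (sub_nonneg.2 h1) (sq_nonneg (x-3/4)), mul_nonneg (sub_nonneg.2 h1) (sq_nonneg (x*(x-3/4))), mul_nonneg h0 (sq_nonneg (x*(x-3/4)))]
  have hk : (x / 2 - 1) ^ 2 * Real.exp x + x/2 + 3/2 ≤ Real.exp 1 := by
    have := mul_le_mul_of_nonneg_left (show Real.exp x ≤ 1 + x + x^2/2 + x^3/6 + x^4*5/96 by linarith) (sq_nonneg (x/2-1))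
    linarith
  have hpos := Real.exp_pos 1
  have : (x / 2 - 1) ^ 2 * Real.exp (x - 1) + x / (2 * Real.exp 1) + 3 / (2 * Real.exp 1) = ((x / 2 - 1) ^ 2 * Real.exp x + x/2 + 3/2) / Real.exp 1 := by
    rw [Real.exp_sub]; field_simp
  rw [this, div_le_one hpos]
  exact hk
end

section
/- Let k ∈ ℕ and let γ : Fin k → ℝ satisfy 0 ≤ γ i ≤ 1 for every i. Then 1 − ∏_{i} (1 − γ i) ≥ (1 − 1/e) · min(∑_{i} γ i, 1). -/
theorem stmt_3 (k : ℕ) (γ : Fin k → ℝ) (hγ : ∀ i, 0 ≤ γ i ∧ γ i ≤ 1) :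
    1 - ∏ i, (1 - γ i) ≥ (1 - 1 / Real.exp 1) * min (∑ i, γ i) 1 := by
  have hS : 0 ≤ ∑ i, γ i := Finset.sum_nonneg fun i _ => (hγ i).1
  have h1 : ∏ i, (1 - γ i) ≤ Real.exp (-∑ i, γ i) := by
    rw [← Finset.sum_neg_distrib, Real.exp_sum]
    refine Finset.prod_le_prod (fun i _ => by linarith [(hγ i).2]) (fun i _ => ?_)
    linarith [Real.add_one_le_exp (-γ i)]
  have hm0 : 0 ≤ min (∑ i, γ i) 1 := le_min hS zero_le_one
  have hm1 : min (∑ i, γ i) 1 ≤ 1 := min_le_right _ _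
  have hmS : min (∑ i, γ i) 1 ≤ ∑ i, γ i := min_le_left _ _
  generalize min (∑ i, γ i) 1 = m at *
  have h2 : Real.exp (-∑ i, γ i) ≤ Real.exp (-m) := Real.exp_le_exp.2 (by linarith)
  have h3 := convexOn_exp.2 (Set.mem_univ (0:ℝ)) (Set.mem_univ (-1:ℝ))
    (sub_nonneg.2 hm1) hm0 (by ring)
  simp only [smul_eq_mul, mul_zero, zero_add, mul_neg, mul_one, Real.exp_zero] at h3
  rw [one_div, ← Real.exp_neg]
  nlinarith
end

section
/- Let t₁ ≤ t₂ be integers, let c ∈ ℕ, and let a : ℤ → ℕ satisfy a τ = 0 for τ ∉ [t₁, t₂). Suppose that for every integer t with t₁ ≤ t < t₂ one has ∑_{τ = t}^{t₂ − 1} a τ ≤ (t₂ − t) + c. Then there exists an injective function g from the set of pairs {(τ, i) : t₁ ≤ τ < t₂, i ∈ Fin (a τ)} into ℤ such that for every such pair (τ, i): τ ≤ g(τ, i) < t₂ + c, and moreover g(τ, 0) = τ whenever a τ ≥ 1. -/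
theorem aux_pick (F : Finset ℤ) (k : ℕ) (x : ℤ) (hx : x ∈ F) (hk : k ≤ F.card) :
    ∃ f : ℕ → ℤ, (∀ i < k, ∀ j < k, f i = f j → i = j) ∧ (∀ i < k, f i ∈ F) ∧ f 0 = x := by
  classical
  have hpos : 0 < F.card := Finset.card_pos.mpr ⟨x, hx⟩
  let e := F.equivFin.symm
  let e' : Fin F.card ≃ F := e.trans (Equiv.swap (e ⟨0, hpos⟩) ⟨x, hx⟩)
  have h0 : e' ⟨0, hpos⟩ = ⟨x, hx⟩ := by simp [e']
  refine ⟨fun i => if h : i < F.card then (e' ⟨i, h⟩ : ℤ) else 0, ?_, ?_, ?_⟩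
  · intro i hi j hj hij
    have hi' : i < F.card := by omega
    have hj' : j < F.card := by omega
    simp only [hi', hj', dif_pos] at hij
    have := e'.injective (Subtype.ext hij)
    simpa using this
  · intro i hi
    have hi' : i < F.card := by omega
    simp only [hi', dif_pos]
    exact (e' ⟨i, hi'⟩).2
  · simp only [hpos, dif_pos, h0]

theorem aux_main (t₂ : ℤ) (c : ℕ) (a : ℤ → ℕ) (n : ℕ)
    (hsum : ∀ t : ℤ, t₂ - n ≤ t → t < t₂ →
      (∑ τ ∈ Finset.Ico t t₂, (a τ : ℤ)) ≤ (t₂ - t) + c) :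
    ∃ g : ℤ → ℕ → ℤ,
      (∀ τ i σ j, t₂ - n ≤ τ → τ < t₂ → t₂ - n ≤ σ → σ < t₂ → i < a τ → j < a σ →
        g τ i = g σ j → τ = σ ∧ i = j) ∧
      (∀ τ i, t₂ - n ≤ τ → τ < t₂ → i < a τ → τ ≤ g τ i ∧ g τ i < t₂ + c) ∧
      (∀ τ, t₂ - n ≤ τ → τ < t₂ → g τ 0 = τ) := by
  classical
  induction n with
  | zero => exact ⟨fun _ _ => 0, by intros; omega, by intros; omega, by intros; omega⟩
  | succ n ih =>
    obtain ⟨g, hg1, hg2, hg3⟩ := ih (fun t h1 h2 => hsum t (by push_cast; omega) h2)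
    obtain ⟨t, ht⟩ : ∃ t : ℤ, t = t₂ - (n + 1 : ℕ) := ⟨_, rfl⟩
    have ht' : t₂ - (n : ℤ) = t + 1 := by rw [ht]; push_cast; ring
    have htlt : t < t₂ := by omega
    rw [ht'] at hg1 hg2 hg3
    rw [← ht] at hsum ⊢
    let U : Finset ℤ := (Finset.Ico (t + 1) t₂).biUnion
      (fun τ => (Finset.range (a τ)).image (g τ))
    have hU : ∀ τ i, t + 1 ≤ τ → τ < t₂ → i < a τ → g τ i ∈ U := by
      intro τ i h1 h2 h3
      simp only [U, Finset.mem_biUnion, Finset.mem_image, Finset.mem_Ico, Finset.mem_range]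
      exact ⟨τ, ⟨h1, h2⟩, i, h3, rfl⟩
    have hUc : U.card ≤ ∑ τ ∈ Finset.Ico (t + 1) t₂, a τ := by
      refine Finset.card_biUnion_le.trans (Finset.sum_le_sum fun τ _ => ?_)
      exact Finset.card_image_le.trans (by simp)
    have htU : t ∉ U := by
      simp only [U, Finset.mem_biUnion, Finset.mem_image, Finset.mem_Ico, Finset.mem_range]
      rintro ⟨τ, ⟨h1, h2⟩, i, h3, h4⟩
      have := hg2 τ i h1 h2 h3
      omega
    have hs := hsum t le_rfl htlt
    have hins : Finset.Ico t t₂ = insert t (Finset.Ico (t + 1) t₂) := by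
      ext x; simp only [Finset.mem_Ico, Finset.mem_insert]; omega
    rw [hins, Finset.sum_insert (by simp)] at hs
    have hUc' : (U.card : ℤ) ≤ ∑ τ ∈ Finset.Ico (t + 1) t₂, (a τ : ℤ) := by exact_mod_cast hUc
    have hcard := Finset.le_card_sdiff U (Finset.Ico t (t₂ + c))
    rw [Int.card_Ico] at hcard
    obtain ⟨f, hf1, hf2, hf3⟩ := aux_pick (Finset.Ico t (t₂ + c) \ U) (a t) t
      (by simp only [Finset.mem_sdiff, Finset.mem_Ico]; exact ⟨by omega, htU⟩) (by omega)
    simp only [Finset.mem_sdiff, Finset.mem_Ico] at hf2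
    refine ⟨fun τ => if τ = t then f else g τ, ?_, ?_, ?_⟩
    · intro τ i σ j h1 h2 h3 h4 h5 h6 h
      by_cases hτ : τ = t <;> by_cases hσ : σ = t
      · subst hτ; subst hσ
        simp only [if_true] at h
        exact ⟨rfl, hf1 i h5 j h6 h⟩
      · subst hτ
        simp only [if_true, if_neg hσ] at h
        exact absurd (h ▸ hU σ j (by omega) h4 h6) (hf2 i h5).2
      · subst hσ
        simp only [if_true, if_neg hτ] at h
        exact absurd (h ▸ hU τ i (by omega) h2 h5) (hf2 j h6).2
      · simp only [if_neg hσ, if_neg hτ] at h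
        exact hg1 τ i σ j (by omega) h2 (by omega) h4 h5 h6 h
    · intro τ i h1 h2 h3
      by_cases hτ : τ = t
      · subst hτ
        simp only [if_true]
        exact (hf2 i h3).1
      · simp only [if_neg hτ]
        exact hg2 τ i (by omega) h2 h3
    · intro τ h1 h2
      by_cases hτ : τ = t
      · subst hτ
        simpa only [if_true] using hf3
      · simp only [if_neg hτ]
        exact hg3 τ (by omega) h2

theorem stmt_6 (t₁ t₂ : ℤ) (h12 : t₁ ≤ t₂) (c : ℕ) (a : ℤ → ℕ)
    (hout : ∀ τ : ℤ, ¬(t₁ ≤ τ ∧ τ < t₂) → a τ = 0)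
    (hsum : ∀ t : ℤ, t₁ ≤ t → t < t₂ →
      (∑ τ ∈ Finset.Ico t t₂, (a τ : ℤ)) ≤ (t₂ - t) + c) :
    ∃ g : (Σ τ : ℤ, Fin (a τ)) → ℤ,
      Function.Injective g ∧
      (∀ p : Σ τ : ℤ, Fin (a τ), p.1 ≤ g p ∧ g p < t₂ + c) ∧
      (∀ (τ : ℤ) (h : 0 < a τ), g ⟨τ, ⟨0, h⟩⟩ = τ) := by
  have hn : t₂ - ((t₂ - t₁).toNat : ℤ) = t₁ := by omega
  obtain ⟨g, h1, h2, h3⟩ := aux_main t₂ c a (t₂ - t₁).toNat (by rw [hn]; exact hsum)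
  rw [hn] at h1 h2 h3
  have key : ∀ τ, 0 < a τ → t₁ ≤ τ ∧ τ < t₂ := by
    intro τ h
    by_contra hc
    have := hout τ hc
    omega
  refine ⟨fun p => g p.1 p.2, ?_, ?_, ?_⟩
  · rintro ⟨τ, i, hi⟩ ⟨σ, j, hj⟩ h
    have k1 := key τ (by omega)
    have k2 := key σ (by omega)
    obtain ⟨rfl, rfl⟩ := h1 τ i σ j k1.1 k1.2 k2.1 k2.2 hi hj h
    rfl
  · rintro ⟨τ, i, hi⟩
    have k1 := key τ (by omega)
    exact h2 τ i k1.1 k1.2 hi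
  · intro τ h
    have k1 := key τ h
    exact h3 τ k1.1 k1.2
end

section
/- Let k ∈ ℕ, let μ : Fin k → ℝ satisfy 0 ≤ μ i ≤ 1 for all i, let μ̄ := ∑_i μ i, and let ε be a real number with 0 < ε ≤ 1/3. Then ∏_{i} (3ε·μ i + 1) ≤ (1 + 3ε)^{(1+3ε)·μ̄} · exp(−3ε²·μ̄). -/
theorem stmt_7 (k : ℕ) (μ : Fin k → ℝ) (hμ : ∀ i, 0 ≤ μ i ∧ μ i ≤ 1)
    (ε : ℝ) (hε : 0 < ε) (hε' : ε ≤ 1 / 3) :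
    ∏ i, (3 * ε * μ i + 1) ≤
      (1 + 3 * ε) ^ ((1 + 3 * ε) * ∑ i, μ i) * Real.exp (-3 * ε ^ 2 * ∑ i, μ i) := by
  have hS : 0 ≤ ∑ i, μ i := Finset.sum_nonneg fun i _ => (hμ i).1
  have h1 : ∏ i, (3 * ε * μ i + 1) ≤ Real.exp (3 * ε * ∑ i, μ i) := by
    rw [Finset.mul_sum, Real.exp_sum]
    refine Finset.prod_le_prod (fun i _ => ?_) (fun i _ => Real.add_one_le_exp _)
    have := (hμ i).1
    positivity
  refine h1.trans ?_
  rw [Real.rpow_def_of_pos (by positivity), ← Real.exp_add]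
  apply Real.exp_le_exp.mpr
  have hl := Real.le_log_one_add_of_nonneg (x := 3 * ε) (by positivity)
  have h2 : 3 * ε + 3 * ε ^ 2 ≤ (1 + 3 * ε) * (2 * (3 * ε) / (3 * ε + 2)) := by
    rw [← mul_div_assoc, le_div_iff₀ (by positivity)]
    nlinarith [mul_nonneg (sq_nonneg ε) (sub_nonneg.mpr hε')]
  have h3 := h2.trans (mul_le_mul_of_nonneg_left hl (by positivity))
  have h4 := mul_le_mul_of_nonneg_right h3 hS
  linarith
end

section
/- For all real numbers a, b₁, b₂ ≥ 0: max( a + (2/e)·b₁ + (3/(2e))·b₂ , (1 − 1/e)·a + (1 − 1/(2e))·b₁ + b₂ ) ≥ (1/2 + 3/(4e))·(a + b₁ + b₂). -/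
theorem stmt_9 (a b₁ b₂ : ℝ) (ha : 0 ≤ a) (hb₁ : 0 ≤ b₁) (hb₂ : 0 ≤ b₂) :
    max (a + (2 / Real.exp 1) * b₁ + (3 / (2 * Real.exp 1)) * b₂)
        ((1 - 1 / Real.exp 1) * a + (1 - 1 / (2 * Real.exp 1)) * b₁ + b₂) ≥
      (1 / 2 + 3 / (4 * Real.exp 1)) * (a + b₁ + b₂) := by
  have he : (2.5 : ℝ) ≤ Real.exp 1 := by
    have := Real.exp_one_gt_d9
    linarith
  have hx : (Real.exp 1)⁻¹ ≤ 0.4 := by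
    have := inv_anti₀ (by norm_num) he
    norm_num at this ⊢
    exact this
  have h1 : 2 / Real.exp 1 = 2 * (Real.exp 1)⁻¹ := by ring
  have h2 : 3 / (2 * Real.exp 1) = 3 / 2 * (Real.exp 1)⁻¹ := by ring
  have h3 : 1 / (2 * Real.exp 1) = 1 / 2 * (Real.exp 1)⁻¹ := by ring
  have h4 : 3 / (4 * Real.exp 1) = 3 / 4 * (Real.exp 1)⁻¹ := by ring
  rw [h1, h2, h3, h4, one_div (Real.exp 1)]
  generalize (Real.exp 1)⁻¹ = x at *
  have hax := mul_le_mul_of_nonneg_left hx ha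
  by_contra! h
  obtain ⟨p, q⟩ := max_lt_iff.mp h
  nlinarith
end

section
/- Let T ∈ ℕ and let a : ℕ → ℕ satisfy a τ = 0 for τ = 0 and for τ > T. Define D := max over all pairs 1 ≤ t₁ ≤ t₂ ≤ T of max( ∑_{τ = t₁}^{t₂} a τ − (t₂ − t₁ + 1), 0 ). Then there exists an injective function s from the set of pairs {(τ, i) : 1 ≤ τ ≤ T, i ∈ Fin (a τ)} into ℕ such that τ ≤ s(τ, i) ≤ τ + D for every such pair. -/
def fifoStart (a : ℕ → ℕ) : ℕ → ℕ
  | 0 => 0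
  | n + 1 => max (fifoStart a n + a n) (n + 1)

theorem fifoStart_ge (a : ℕ → ℕ) (n : ℕ) : n ≤ fifoStart a n := by
  cases n with
  | zero => simp
  | succ n => exact le_max_right _ _

theorem fifoStart_lt (a : ℕ → ℕ) (m n : ℕ) (h : m < n) :
    fifoStart a m + a m ≤ fifoStart a n := by
  induction n, h using Nat.le_induction with
  | base => exact le_max_left _ _
  | succ n _ ih =>
    have : fifoStart a n + a n ≤ fifoStart a (n + 1) := le_max_left _ _
    omega

theorem fifoStart_eq (a : ℕ → ℕ) (h0 : a 0 = 0) (n : ℕ) :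
    ∃ t, 1 ≤ t ∧ t ≤ n + 1 ∧
      fifoStart a (n + 1) + a (n + 1) = t + ∑ τ ∈ Finset.Icc t (n + 1), a τ := by
  induction n with
  | zero => exact ⟨1, by simp [fifoStart, h0]⟩
  | succ n ih =>
    obtain ⟨t, h1, h2, h3⟩ := ih
    have e : fifoStart a (n + 1 + 1) = max (fifoStart a (n + 1) + a (n + 1)) (n + 1 + 1) := rfl
    rcases le_total (fifoStart a (n + 1) + a (n + 1)) (n + 1 + 1) with h | h
    · refine ⟨n + 1 + 1, by omega, le_rfl, ?_⟩
      rw [e, max_eq_right h]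
      simp
    · refine ⟨t, h1, by omega, ?_⟩
      rw [e, max_eq_left h, Finset.sum_Icc_succ_top (by omega), h3]
      omega

theorem stmt_11 (T : ℕ) (a : ℕ → ℕ) (h0 : a 0 = 0) (hT : ∀ τ, T < τ → a τ = 0)
    (D : ℕ)
    (hD : D = Finset.sup ((Finset.Icc 1 T ×ˢ Finset.Icc 1 T).filter (fun p => p.1 ≤ p.2))
      (fun p => (∑ τ ∈ Finset.Icc p.1 p.2, a τ) - (p.2 - p.1 + 1))) :
    ∃ s : (Σ τ : ℕ, Fin (a τ)) → ℕ,
      Function.Injective s ∧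
      ∀ p : Σ τ : ℕ, Fin (a τ), p.1 ≤ s p ∧ s p ≤ p.1 + D := by
  refine ⟨fun p => fifoStart a p.1 + p.2, ?_, ?_⟩
  · rintro ⟨m, i⟩ ⟨n, j⟩ h
    simp only at h
    have hi := i.2
    have hj := j.2
    rcases lt_trichotomy m n with hmn | hmn | hmn
    · have := fifoStart_lt a m n hmn
      omega
    · subst hmn
      have : i = j := Fin.ext (by omega)
      rw [this]
    · have := fifoStart_lt a n m hmn
      omega
  · rintro ⟨m, i⟩
    have hi := i.2
    have hm := fifoStart_ge a m
    refine ⟨by simp only; omega, ?_⟩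
    simp only
    cases m with
    | zero => omega
    | succ n =>
      obtain ⟨t, h1, h2, h3⟩ := fifoStart_eq a h0 n
      have hnT : n + 1 ≤ T := by
        by_contra hc
        have := hT (n + 1) (by omega)
        omega
      have hle : (∑ τ ∈ Finset.Icc t (n + 1), a τ) - (n + 1 - t + 1) ≤ D := by
        rw [hD]
        exact Finset.le_sup (f := fun p : ℕ × ℕ =>
          (∑ τ ∈ Finset.Icc p.1 p.2, a τ) - (p.2 - p.1 + 1)) (b := (t, n + 1))
          (by simp only [Finset.mem_filter, Finset.mem_product, Finset.mem_Icc]; omega)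
      omega
end

section
/- Consider a broadcast scheduling instance and an integer L ≥ 1. Assume that for every page p, any two adjacent release times of requests for p differ by at most L − 1 (i.e., consecutive elements of T_p are less than L apart). Suppose σ is a schedule with maximum flow time at most L. Then for every time t ∈ ℕ, the number of pages p that are requested at least once and satisfy t ∈ W_p is at most 2L. -/
/-- Request `ρ` is completed at time `t` under schedule `σ`: `t` is after `ρ`'s release,
page `p_ρ` is transmitted at `t`, and at no earlier time after the release. -/
def CompletedAt {P R : Type*} (rel : R → ℕ) (page : R → P) (σ : ℕ → Option P)
    (ρ : R) (t : ℕ) : Prop :=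
  rel ρ < t ∧ σ t = some (page ρ) ∧ ∀ t', rel ρ < t' → t' < t → σ t' ≠ some (page ρ)

/-- Schedule `σ` has maximum flow time at most `L`. -/
def MaxFlowLE {P R : Type*} (rel : R → ℕ) (page : R → P) (σ : ℕ → Option P) (L : ℕ) : Prop :=
  ∀ ρ, ∃ t, rel ρ + 1 ≤ t ∧ t ≤ rel ρ + L ∧ CompletedAt rel page σ ρ t

/-- `T_p`: the set of release times of requests for page `p`. -/
def RelTimes {P R : Type*} (rel : R → ℕ) (page : R → P) (p : P) : Set ℕ :=
  {r | ∃ ρ, page ρ = p ∧ rel ρ = r}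

/-- `W_p = [min T_p + 1, max T_p + L]`: the window of page `p`. -/
def Window {P R : Type*} (rel : R → ℕ) (page : R → P) (L : ℕ) (p : P) : Set ℕ :=
  Set.Icc (sInf (RelTimes rel page p) + 1) (sSup (RelTimes rel page p) + L)

theorem stmt_12 {P R : Type*} [Fintype P] [Fintype R]
    (rel : R → ℕ) (page : R → P) (L : ℕ) (hL : 1 ≤ L)
    (hadj : ∀ (p : P) (r r' : ℕ), r ∈ RelTimes rel page p → r' ∈ RelTimes rel page p →
      r < r' → (∀ r'', r'' ∈ RelTimes rel page p → ¬(r < r'' ∧ r'' < r')) → r' - r ≤ L - 1)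
    (σ : ℕ → Option P) (hσ : MaxFlowLE rel page σ L) (t : ℕ) :
    {p : P | (∃ ρ, page ρ = p) ∧ t ∈ Window rel page L p}.ncard ≤ 2 * L := by
  classical
  have key : ∀ p ∈ {p : P | (∃ ρ, page ρ = p) ∧ t ∈ Window rel page L p},
      ∃ s ∈ Finset.Ioc (t - L) (t + L), σ s = some p := by
    rintro p ⟨⟨ρ₀, hρ₀⟩, hw1, hw2⟩
    have hne : (RelTimes rel page p).Nonempty := ⟨rel ρ₀, ρ₀, hρ₀, rfl⟩
    have hbdd : BddAbove (RelTimes rel page p) := by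
      refine ((Set.finite_range rel).subset ?_).bddAbove
      rintro _ ⟨ρ, _, rfl⟩
      exact ⟨ρ, rfl⟩
    have hm := Nat.sInf_mem hne
    have hM := Nat.sSup_mem hne hbdd
    set m := sInf (RelTimes rel page p)
    set M := sSup (RelTimes rel page p)
    have hA : (RelTimes rel page p ∩ Set.Iio t).Nonempty := ⟨m, hm, by simp; omega⟩
    have hAb : BddAbove (RelTimes rel page p ∩ Set.Iio t) := hbdd.mono Set.inter_subset_left
    obtain ⟨hr, hrt⟩ := Nat.sSup_mem hA hAb
    have hrmax : ∀ x ∈ RelTimes rel page p, x < t →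
        x ≤ sSup (RelTimes rel page p ∩ Set.Iio t) := fun x hx hxt => le_csSup hAb ⟨hx, hxt⟩
    generalize sSup (RelTimes rel page p ∩ Set.Iio t) = r at hr hrt hrmax
    simp only [Set.mem_Iio] at hrt
    have hrL : t ≤ r + L := by
      by_contra hcon
      have hMt : t ≤ M := by
        by_contra h
        have := hrmax M hM (by omega)
        omega
      have hB : (RelTimes rel page p ∩ Set.Ici t).Nonempty := ⟨M, hM, hMt⟩
      obtain ⟨hr', hr't⟩ := Nat.sInf_mem hB
      have hmin : ∀ x ∈ RelTimes rel page p, t ≤ x →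
        sInf (RelTimes rel page p ∩ Set.Ici t) ≤ x := fun x hx hxt => Nat.sInf_le ⟨hx, hxt⟩
      generalize sInf (RelTimes rel page p ∩ Set.Ici t) = r' at hr' hr't hmin
      simp only [Set.mem_Ici] at hr't
      have := hadj p r r' hr hr' (by omega) (by
        rintro x hx ⟨h1, h2⟩
        by_cases hxt : x < t
        · have := hrmax x hx hxt
          omega
        · have := hmin x hx (by omega)
          omega)
      omega
    obtain ⟨ρ, hρ, rfl⟩ := hr
    obtain ⟨s, hs1, hs2, _, hs, _⟩ := hσ ρ
    exact ⟨s, by simp only [Finset.mem_Ioc]; omega, by rw [hs, hρ]⟩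
  have hsub : some '' {p : P | (∃ ρ, page ρ = p) ∧ t ∈ Window rel page L p} ⊆
      (((Finset.Ioc (t - L) (t + L)).image σ : Finset (Option P)) : Set (Option P)) := by
    rintro _ ⟨p, hp, rfl⟩
    obtain ⟨s, hs, h⟩ := key p hp
    exact Finset.mem_coe.2 (Finset.mem_image.2 ⟨s, hs, h⟩)
  rw [← Set.ncard_image_of_injective _ (Option.some_injective P)]
  refine (Set.ncard_le_ncard hsub (Finset.finite_toSet _)).trans ?_
  rw [Set.ncard_coe_finset]
  refine Finset.card_image_le.trans ?_
  rw [Nat.card_Ioc]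
  omega
end

section
/- Consider a broadcast scheduling instance and an integer L ≥ 1. Assume that for every page p, any two adjacent release times of requests for p differ by at most L − 1 (i.e., consecutive elements of T_p are less than L apart). Suppose there exists a schedule with maximum flow time at most L. Then the set of pages that are requested at least once can be partitioned into at most 2L groups such that for any two distinct pages p ≠ q in the same group, the windows W_p and W_q are disjoint; i.e., there is a coloring c of these pages with values in Fin (2L) such that c p = c q and p ≠ q implies W_p ∩ W_q = ∅. -/
theorem slot_aux {P R : Type*} [Fintype R]
    (rel : R → ℕ) (page : R → P) (L : ℕ) (hL : 1 ≤ L)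
    (hadj : ∀ (p : P) (r r' : ℕ), r ∈ RelTimes rel page p → r' ∈ RelTimes rel page p →
      r < r' → (∀ r'', r'' ∈ RelTimes rel page p → ¬(r < r'' ∧ r'' < r')) → r' - r ≤ L - 1)
    (σ : ℕ → Option P) (hσ : MaxFlowLE rel page σ L) (p : P) (hp : ∃ ρ, page ρ = p)
    (t : ℕ) (ht : t ∈ Window rel page L p) :
    ∃ s ∈ Finset.Ico (t + 1 - L) (t + L), σ s = some p := by
  classical
  have hfin : (RelTimes rel page p).Finite :=
    (Set.finite_range rel).subset (by rintro r ⟨ρ, _, h⟩; exact ⟨ρ, h⟩)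
  have hne : (RelTimes rel page p).Nonempty := by
    obtain ⟨ρ, h⟩ := hp
    exact ⟨rel ρ, ρ, h, rfl⟩
  have hinf := Nat.sInf_mem hne
  have hsup := Nat.sSup_mem hne hfin.bddAbove
  obtain ⟨h1, h2⟩ := ht
  obtain ⟨r, ⟨hr, hrt⟩, hmax⟩ := Set.exists_max_image
    (RelTimes rel page p ∩ {x | x < t}) id (hfin.subset Set.inter_subset_left)
    ⟨_, hinf, by simpa using h1⟩
  simp only [Set.mem_ofPred_eq] at hrt
  have hmax' : ∀ x ∈ RelTimes rel page p, x < t → x ≤ r := fun x hx hxt => hmax x ⟨hx, hxt⟩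
  have key : t ≤ r + L := by
    by_cases hs : sSup (RelTimes rel page p) < t
    · have := hmax' _ hsup hs
      omega
    · obtain ⟨r', ⟨hr', hrt'⟩, hmin⟩ := Set.exists_min_image
        (RelTimes rel page p ∩ {x | t ≤ x}) id (hfin.subset Set.inter_subset_left)
        ⟨_, hsup, by simpa using hs⟩
      simp only [Set.mem_ofPred_eq] at hrt'
      have := hadj p r r' hr hr' (by omega) (by
        rintro x hx ⟨hx1, hx2⟩
        by_cases hxt : x < t
        · have := hmax' x hx hxt
          omega
        · have : r' ≤ x := hmin x ⟨hx, by simpa using hxt⟩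
          omega)
      omega
  obtain ⟨ρ, hρ, rfl⟩ := hr
  obtain ⟨s, hs1, hs2, _, hs3, _⟩ := hσ ρ
  exact ⟨s, by rw [Finset.mem_Ico]; omega, by rw [hs3, hρ]⟩

theorem stmt_13 {P R : Type*} [Fintype P] [Fintype R]
    (rel : R → ℕ) (page : R → P) (L : ℕ) (hL : 1 ≤ L)
    (hadj : ∀ (p : P) (r r' : ℕ), r ∈ RelTimes rel page p → r' ∈ RelTimes rel page p →
      r < r' → (∀ r'', r'' ∈ RelTimes rel page p → ¬(r < r'' ∧ r'' < r')) → r' - r ≤ L - 1)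
    (hσ : ∃ σ : ℕ → Option P, MaxFlowLE rel page σ L) :
    ∃ c : P → Fin (2 * L), ∀ p q : P, (∃ ρ, page ρ = p) → (∃ ρ, page ρ = q) →
      p ≠ q → c p = c q → Window rel page L p ∩ Window rel page L q = ∅ := by
  classical
  obtain ⟨σ, hσ⟩ := hσ
  have bound : ∀ (t : ℕ) (s : Finset P),
      (∀ p ∈ s, (∃ ρ, page ρ = p) ∧ t ∈ Window rel page L p) → s.card < 2 * L := by
    intro t s hs
    choose! g hg1 hg2 using fun p (hp : p ∈ s) =>
      slot_aux rel page L hL hadj σ hσ p (hs p hp).1 t (hs p hp).2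
    have := Finset.card_le_card_of_injOn g hg1 (by
      intro p hp q hq h
      have a := hg2 p hp
      have b := hg2 q hq
      rw [h, b] at a
      exact (Option.some.inj a).symm)
    rw [Nat.card_Ico] at this
    omega
  have main : ∀ s : Finset P, (∀ p ∈ s, ∃ ρ, page ρ = p) →
      ∃ c : P → Fin (2 * L), ∀ p ∈ s, ∀ q ∈ s, p ≠ q → c p = c q →
        Window rel page L p ∩ Window rel page L q = ∅ := by
    intro s
    induction s using Finset.induction_on_max_value
      (fun p => sInf (RelTimes rel page p)) with
    | empty => exact fun _ => ⟨fun _ => ⟨0, by omega⟩, by simp⟩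
    | insert a s ha hmax ih =>
      intro hreq
      obtain ⟨c, hc⟩ := ih (fun p hp => hreq p (Finset.mem_insert_of_mem hp))
      set N := s.filter (fun x => sInf (RelTimes rel page a) + 1 ∈ Window rel page L x) with hN
      have hcard : N.card < 2 * L := bound (sInf (RelTimes rel page a) + 1) N (by
        intro p hp
        rw [hN, Finset.mem_filter] at hp
        exact ⟨hreq p (Finset.mem_insert_of_mem hp.1), hp.2⟩)
      obtain ⟨k, hk⟩ : ∃ k : Fin (2 * L), k ∉ N.image c := by
        by_contra! h
        have h1 : (Finset.univ : Finset (Fin (2 * L))) ⊆ N.image c := fun x _ => h x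
        have h2 := Finset.card_le_card h1
        have h3 : (N.image c).card ≤ N.card := Finset.card_image_le
        rw [Finset.card_univ, Fintype.card_fin] at h2
        omega
      have hdis : ∀ x ∈ s, c x = k → Window rel page L x ∩ Window rel page L a = ∅ := by
        intro x hx hxk
        by_contra hne
        obtain ⟨t, ⟨_, ht2⟩, ht3, _⟩ := Set.nonempty_iff_ne_empty.mpr hne
        refine hk (Finset.mem_image.mpr ⟨x, Finset.mem_filter.mpr ⟨hx, ?_⟩, hxk⟩)
        exact ⟨Nat.succ_le_succ (hmax x hx), ht3.trans ht2⟩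
      refine ⟨Function.update c a k, ?_⟩
      intro p hp q hq hpq hcc
      rcases Finset.mem_insert.mp hp with rfl | hp' <;>
        rcases Finset.mem_insert.mp hq with rfl | hq'
      · exact absurd rfl hpq
      · rw [Function.update_self, Function.update_of_ne hpq.symm] at hcc
        rw [Set.inter_comm]
        exact hdis q hq' hcc.symm
      · rw [Function.update_self, Function.update_of_ne hpq] at hcc
        exact hdis p hp' hcc
      · rw [Function.update_of_ne (by rintro rfl; exact ha hp'),
          Function.update_of_ne (by rintro rfl; exact ha hq')] at hcc
        exact hc p hp' q hq' hpq hcc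
  obtain ⟨c, hc⟩ := main (Finset.univ.filter (fun p => ∃ ρ, page ρ = p)) (by simp)
  exact ⟨c, fun p q hp hq => hc p (by simpa using hp) q (by simpa using hq)⟩
end

section
/- Let n, k ∈ ℕ and let a, b : Fin n → ℤ with a i ≤ b i for every i, defining closed integer intervals [a i, b i]. Suppose that for every x ∈ ℤ, the number of indices i with a i ≤ x ≤ b i is at most k. Then there exists a coloring c : Fin n → Fin k such that whenever i ≠ j and c i = c j, the intervals [a i, b i] and [a j, b j] are disjoint. -/
theorem stmt_14 (n k : ℕ) (a b : Fin n → ℤ) (hab : ∀ i, a i ≤ b i)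
    (hcov : ∀ x : ℤ, (Finset.univ.filter (fun i : Fin n => a i ≤ x ∧ x ≤ b i)).card ≤ k) :
    ∃ c : Fin n → Fin k, ∀ i j : Fin n, i ≠ j → c i = c j →
      Set.Icc (a i) (b i) ∩ Set.Icc (a j) (b j) = ∅ := by
  have hk : ∀ i : Fin n, 0 < k := fun i =>
    lt_of_lt_of_le (Finset.card_pos.mpr ⟨i, by simp [hab i]⟩) (hcov (a i))
  have key : ∀ s : Finset (Fin n), ∃ c : Fin n → Fin k, ∀ i ∈ s, ∀ j ∈ s, i ≠ j → c i = c j →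
      b i < a j ∨ b j < a i := by
    intro s
    induction s using Finset.induction_on_max_value a with
    | empty => exact ⟨fun i => ⟨0, hk i⟩, by simp⟩
    | insert i s his hmax ih =>
      obtain ⟨c, hc⟩ := ih
      have hsub : insert i (s.filter (fun j => a i ≤ b j)) ⊆
          Finset.univ.filter (fun j : Fin n => a j ≤ a i ∧ a i ≤ b j) := by
        intro j hj
        simp only [Finset.mem_insert, Finset.mem_filter] at hj
        simp only [Finset.mem_filter, Finset.mem_univ, true_and]
        rcases hj with rfl | ⟨h1, h2⟩
        · exact ⟨le_rfl, hab _⟩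
        · exact ⟨hmax j h1, h2⟩
      have h1 := (Finset.card_le_card hsub).trans (hcov (a i))
      rw [Finset.card_insert_of_notMem (by simp [his])] at h1
      have h2 : ((s.filter (fun j => a i ≤ b j)).image c).card < (Finset.univ : Finset (Fin k)).card := by
        have := Finset.card_image_le (s := s.filter (fun j => a i ≤ b j)) (f := c)
        rw [Finset.card_univ, Fintype.card_fin]
        omega
      obtain ⟨q, -, hq⟩ := Finset.exists_mem_notMem_of_card_lt_card h2
      have hq' : ∀ j ∈ s, c j = q → b j < a i := by
        intro j hj hjq
        by_contra h
        exact hq (Finset.mem_image.mpr ⟨j, Finset.mem_filter.mpr ⟨hj, not_lt.mp h⟩, hjq⟩)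
      refine ⟨Function.update c i q, ?_⟩
      intro x hx y hy hxy hcxy
      rcases Finset.mem_insert.mp hx with rfl | hx1
      · rcases Finset.mem_insert.mp hy with rfl | hy
        · exact absurd rfl hxy
        · rw [Function.update_self, Function.update_of_ne hxy.symm] at hcxy
          exact Or.inr (hq' y hy hcxy.symm)
      · have hxi : x ≠ i := fun h => his (h ▸ hx1)
        rcases Finset.mem_insert.mp hy with rfl | hy
        · rw [Function.update_self, Function.update_of_ne hxi] at hcxy
          exact Or.inl (hq' x hx1 hcxy)
        · have hyi : y ≠ i := fun h => his (h ▸ hy)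
          rw [Function.update_of_ne hxi, Function.update_of_ne hyi] at hcxy
          exact hc x hx1 y hy hxy hcxy
  obtain ⟨c, hc⟩ := key Finset.univ
  refine ⟨c, fun i j hij h => ?_⟩
  have := hc i (Finset.mem_univ _) j (Finset.mem_univ _) hij h
  ext x
  simp only [Set.mem_inter_iff, Set.mem_Icc, Set.mem_empty_iff_false, iff_false]
  omega
end

section
/- Consider a broadcast scheduling instance, an integer L ≥ 1, and an integer s with 1 ≤ s. Suppose there exists a schedule σ with maximum flow time at most L. Then there exists a batch schedule σ' with capacity s such that σ' t = ∅ whenever s does not divide t, and such that every request ρ is completed under σ' at some time t with s·⌈r_ρ/s⌉ < t ≤ s·⌈r_ρ/s⌉ + L + 2s. -/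
theorem stmt_15 {P R : Type*} [Fintype R]
    (rel : R → ℕ) (page : R → P) (L s : ℕ) (hL : 1 ≤ L) (hs : 1 ≤ s)
    (h : ∃ σ : ℕ → Option P, MaxFlowLE rel page σ L) :
    ∃ σ' : ℕ → Finset P,
      (∀ t, (σ' t).card ≤ s) ∧
      (∀ t, ¬ s ∣ t → σ' t = ∅) ∧
      ∀ ρ, ∃ t, rel ρ < t ∧ page ρ ∈ σ' t ∧
        s * ((rel ρ + s - 1) / s) < t ∧ t ≤ s * ((rel ρ + s - 1) / s) + L + 2 * s := by
  classical
  obtain ⟨σ, hσ⟩ := h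
  refine ⟨fun t => if s ∣ t then
    (Finset.Icc (t + 1 - 2 * s) (t - s)).biUnion (fun u => (σ u).toFinset) else ∅, ?_, ?_, ?_⟩
  · intro t
    by_cases hd : s ∣ t
    · simp only [hd, if_true]
      refine (Finset.card_biUnion_le_card_mul _ _ 1 ?_).trans ?_
      · intro u _
        cases σ u <;> simp
      · rw [Nat.card_Icc]
        omega
    · simp [hd]
  · intro t hd
    simp [hd]
  · intro ρ
    obtain ⟨t, h1, h2, -, h3, -⟩ := hσ ρ
    have e1 := Nat.div_add_mod (rel ρ + s - 1) s
    have e2 := Nat.mod_lt (rel ρ + s - 1) hs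
    have e3 := Nat.div_add_mod (t + s - 1) s
    have e4 := Nat.mod_lt (t + s - 1) hs
    have e5 : s * ((rel ρ + s - 1) / s) ≤ s * ((t + s - 1) / s) :=
      Nat.mul_le_mul_left _ (Nat.div_le_div_right (by omega))
    have e6 : s * ((t + s - 1) / s + 1) = s * ((t + s - 1) / s) + s := by ring
    refine ⟨s * ((t + s - 1) / s + 1), by omega, ?_, by omega, by omega⟩
    simp only [Nat.dvd_mul_right, if_true, Finset.mem_biUnion, Finset.mem_Icc]
    refine ⟨t, by omega, by simp [h3]⟩
end

section
/- Consider a broadcast scheduling instance and an integer s ≥ 1. Let σ' be a batch schedule with capacity s such that σ' t = ∅ whenever s does not divide t. Then there exists a schedule σ : ℕ → Option P (one page per time step) such that for every request ρ and every time C' with C' > s·⌈r_ρ/s⌉ and p_ρ ∈ σ' C', the request ρ is completed under σ at some time t' with r_ρ < t' ≤ r_ρ + (C' − s·⌈r_ρ/s⌉) + 2s. -/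
theorem stmt_16 {P R : Type*} [Fintype R]
    (rel : R → ℕ) (page : R → P) (s : ℕ) (hs : 1 ≤ s)
    (σ' : ℕ → Finset P) (hcap : ∀ t, (σ' t).card ≤ s)
    (hdiv : ∀ t, ¬ s ∣ t → σ' t = ∅) :
    ∃ σ : ℕ → Option P, ∀ (ρ : R) (C' : ℕ),
      s * ((rel ρ + s - 1) / s) < C' → page ρ ∈ σ' C' →
      ∃ t', rel ρ < t' ∧ t' ≤ rel ρ + (C' - s * ((rel ρ + s - 1) / s)) + 2 * s ∧
        CompletedAt rel page σ ρ t' := by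
  classical
  refine ⟨fun t => (σ' (s * (t / s))).toList[t % s]?, ?_⟩
  intro ρ C' hC hp
  have hd : s ∣ C' := by
    by_contra h
    rw [hdiv C' h] at hp
    simp at hp
  obtain ⟨k, rfl⟩ := hd
  have h1 := Nat.div_add_mod (rel ρ + s - 1) s
  have h2 := Nat.mod_lt (rel ρ + s - 1) hs
  generalize hS : s * ((rel ρ + s - 1) / s) = S at *
  obtain ⟨i, hi, hget⟩ := List.getElem_of_mem (Finset.mem_toList.mpr hp)
  have his : i < s := by
    have h3 := hcap (s * k)
    rw [Finset.length_toList] at hi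
    omega
  have hex : ∃ t, rel ρ < t ∧
      (σ' (s * (t / s))).toList[t % s]? = some (page ρ) := by
    refine ⟨s * k + i, by omega, ?_⟩
    rw [Nat.mul_add_div hs, Nat.div_eq_of_lt his, Nat.mul_add_mod, Nat.mod_eq_of_lt his,
      Nat.add_zero, List.getElem?_eq_getElem hi, hget]
  have hle : Nat.find hex ≤ s * k + i := by
    apply Nat.find_min'
    refine ⟨by omega, ?_⟩
    rw [Nat.mul_add_div hs, Nat.div_eq_of_lt his, Nat.mul_add_mod, Nat.mod_eq_of_lt his,
      Nat.add_zero, List.getElem?_eq_getElem hi, hget]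
  have hsp := Nat.find_spec hex
  refine ⟨Nat.find hex, hsp.1, by omega, hsp.1, hsp.2, ?_⟩
  intro t' ht' hlt heq
  exact Nat.find_min hex hlt ⟨ht', heq⟩
end

section
/- Consider a broadcast scheduling instance and integers ℓ ≥ 1 and B ≥ 1. Suppose there exists a batch schedule with capacity B under which every request ρ is completed at some time in [r_ρ + 1, r_ρ + ℓ]. Then there exists a batch schedule σ with capacity B under which every request ρ is completed at some time in [r_ρ + 1, r_ρ + ℓ] and which additionally satisfies: (i) for every page p and every interval of ℓ consecutive time steps, there are at most two times t in the interval with p ∈ σ t; and (ii) for every time t, every page in σ t was requested at some release time in [t − ℓ, t − 1]. -/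
theorem stmt_17 {P R : Type*} [Fintype R] [DecidableEq P]
    (rel : R → ℕ) (page : R → P) (ℓ B : ℕ) (hℓ : 1 ≤ ℓ) (hB : 1 ≤ B)
    (h : ∃ σ₀ : ℕ → Finset P, (∀ t, (σ₀ t).card ≤ B) ∧
      ∀ ρ, ∃ t, rel ρ < t ∧ t ≤ rel ρ + ℓ ∧ page ρ ∈ σ₀ t) :
    ∃ σ : ℕ → Finset P,
      (∀ t, (σ t).card ≤ B) ∧
      (∀ ρ, ∃ t, rel ρ < t ∧ t ≤ rel ρ + ℓ ∧ page ρ ∈ σ t) ∧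
      (∀ (p : P) (t₀ : ℕ), ((Finset.Ico t₀ (t₀ + ℓ)).filter (fun t => p ∈ σ t)).card ≤ 2) ∧
      (∀ (t : ℕ) (p : P), p ∈ σ t → ∃ ρ, page ρ = p ∧ rel ρ < t ∧ t ≤ rel ρ + ℓ) := by
  classical
  obtain ⟨σ₀, hc, hf⟩ := h
  have key : ∀ p : P, ∃ S : Finset ℕ, Minimal (fun S : Finset ℕ => (∀ t ∈ S, p ∈ σ₀ t) ∧
      ∀ ρ, page ρ = p → ∃ t ∈ S, rel ρ < t ∧ t ≤ rel ρ + ℓ) S := by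
    intro p
    apply exists_minimal_of_wellFoundedLT
    choose f hf1 hf2 hf3 using hf
    refine ⟨(Finset.univ.filter (fun ρ => page ρ = p)).image f, ?_, ?_⟩
    · intro t ht
      simp only [Finset.mem_image, Finset.mem_filter, Finset.mem_univ, true_and] at ht
      obtain ⟨ρ, h1, h2⟩ := ht
      rw [← h1, ← h2]
      exact hf3 ρ
    · intro ρ hρ
      exact ⟨f ρ, Finset.mem_image_of_mem f (by simp [hρ]), hf1 ρ, hf2 ρ⟩
  choose S hS using key
  have crit : ∀ p, ∀ t ∈ S p, ∃ ρ, page ρ = p ∧ rel ρ < t ∧ t ≤ rel ρ + ℓ ∧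
      ∀ u ∈ S p, rel ρ < u → u ≤ rel ρ + ℓ → u = t := by
    intro p t ht
    by_contra hcon
    push Not at hcon
    have hle := (hS p).2 (y := (S p).erase t) ⟨fun u hu =>
      (hS p).1.1 u (Finset.mem_of_mem_erase hu), ?_⟩ (Finset.erase_subset _ _)
    · exact Finset.notMem_erase t (S p) (hle ht)
    · intro ρ hρ
      obtain ⟨u, hu, h1, h2⟩ := (hS p).1.2 ρ hρ
      by_cases hut : u = t
      · subst hut
        obtain ⟨v, hv, h3, h4, h5⟩ := hcon ρ hρ h1 h2
        exact ⟨v, Finset.mem_erase.2 ⟨h5, hv⟩, h3, h4⟩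
      · exact ⟨u, Finset.mem_erase.2 ⟨hut, hu⟩, h1, h2⟩
  have three : ∀ p, ∀ a ∈ S p, ∀ b ∈ S p, ∀ c ∈ S p, a < b → b < c → a + ℓ ≤ c := by
    intro p a ha b hb c hcc hab hbc
    obtain ⟨ρ, _, h1, h2, h3⟩ := crit p b hb
    have := h3 a ha
    have := h3 c hcc
    omega
  refine ⟨fun t => (σ₀ t).filter (fun p => t ∈ S p), ?_, ?_, ?_, ?_⟩
  · intro t
    exact (Finset.card_filter_le _ _).trans (hc t)
  · intro ρ
    obtain ⟨t, ht, h1, h2⟩ := (hS (page ρ)).1.2 ρ rfl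
    exact ⟨t, h1, h2, Finset.mem_filter.2 ⟨(hS (page ρ)).1.1 t ht, ht⟩⟩
  · intro p t₀
    by_contra hcon
    push Not at hcon
    obtain ⟨a, b, c, ha, hb, hcc, h1, h2, h3⟩ := Finset.two_lt_card_iff.1 hcon
    simp only [Finset.mem_filter, Finset.mem_Ico] at ha hb hcc
    have T := three p
    have q1 := T a ha.2.2 b hb.2.2 c hcc.2.2
    have q2 := T a ha.2.2 c hcc.2.2 b hb.2.2
    have q3 := T b hb.2.2 a ha.2.2 c hcc.2.2
    have q4 := T b hb.2.2 c hcc.2.2 a ha.2.2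
    have q5 := T c hcc.2.2 a ha.2.2 b hb.2.2
    have q6 := T c hcc.2.2 b hb.2.2 a ha.2.2
    omega
  · intro t p hp
    obtain ⟨ρ, h1, h2, h3, _⟩ := crit p t (Finset.mem_filter.1 hp).2
    exact ⟨ρ, h1, h2, h3⟩
end

section
/- Consider a broadcast scheduling instance in which at least one request has release time 0, and let t₂ be the least natural number t such that the number of requests ρ with r_ρ ≤ t is at most t + 1 (such t exists since R is finite). Let σ be a schedule satisfying, for every time t ≥ 1: if σ t = some p then some request for page p is outstanding at time t, and if σ t = none then no request is outstanding at time t. Then every request ρ with r_ρ ≤ t₂ is completed under σ at some time t ≤ t₂ + 1. -/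
/-- Request `ρ` is outstanding at time `t`: it has been released before `t` and has not
been completed at any time `t' < t`. -/
def Outstanding {P R : Type*} (rel : R → ℕ) (page : R → P) (σ : ℕ → Option P)
    (ρ : R) (t : ℕ) : Prop :=
  rel ρ < t ∧ ∀ t', t' < t → ¬ CompletedAt rel page σ ρ t'

theorem stmt_18 {P R : Type*} [Fintype R]
    (rel : R → ℕ) (page : R → P)
    (h0 : ∃ ρ : R, rel ρ = 0)
    (t₂ : ℕ) (ht₂ : IsLeast {t : ℕ | {ρ : R | rel ρ ≤ t}.ncard ≤ t + 1} t₂)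
    (σ : ℕ → Option P)
    (hbusy : ∀ t, 1 ≤ t → ∀ p, σ t = some p →
      ∃ ρ, page ρ = p ∧ Outstanding rel page σ ρ t)
    (hidle : ∀ t, 1 ≤ t → σ t = none → ∀ ρ : R, ¬ Outstanding rel page σ ρ t) :
    ∀ ρ : R, rel ρ ≤ t₂ → ∃ t, t ≤ t₂ + 1 ∧ CompletedAt rel page σ ρ t := by
  classical
  intro ρ0 hρ0
  by_contra hcon
  push Not at hcon
  have huniq : ∀ ρ t t', CompletedAt rel page σ ρ t → CompletedAt rel page σ ρ t' → t = t' := by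
    intro ρ t t' h h'
    rcases lt_trichotomy t t' with hl | hl | hl
    · exact absurd h.2.1 (h'.2.2 t h.1 hl)
    · exact hl
    · exact absurd h'.2.1 (h.2.2 t' h'.1 hl)
  have hex : ∀ t, ∃ ρ, 1 ≤ t → σ t ≠ none →
      CompletedAt rel page σ ρ t ∧ Outstanding rel page σ ρ t := by
    intro t
    by_cases h1 : 1 ≤ t
    · cases hσ : σ t with
      | none => exact ⟨ρ0, fun _ h => absurd rfl h⟩
      | some p =>
        obtain ⟨ρ, hp, ho⟩ := hbusy t h1 p hσ
        refine ⟨ρ, fun _ _ => ⟨⟨ho.1, by rw [hσ, hp], ?_⟩, ho⟩⟩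
        intro t' hr
        induction t' using Nat.strong_induction_on with
        | _ t' ih =>
          intro hlt heq
          exact ho.2 t' hlt ⟨hr, heq, fun u hu hut => ih u hut hu (hut.trans hlt)⟩
    · exact ⟨ρ0, fun h => absurd h h1⟩
  choose f hf using hex
  let N : ℕ → Finset R := fun t => Finset.univ.filter (fun ρ => rel ρ ≤ t)
  have hN : ∀ t, {ρ : R | rel ρ ≤ t}.ncard = (N t).card := by
    intro t
    rw [← Set.ncard_coe_finset]
    congr 1
    ext ρ
    simp [N]
  have hle : (N t₂).card ≤ t₂ + 1 := by rw [← hN]; exact ht₂.1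
  have hlow : ∀ t, t < t₂ → t + 2 ≤ (N t).card := by
    intro t ht
    by_contra hc
    have : t₂ ≤ t := ht₂.2 (by simp only [Set.mem_setOf_eq]; rw [hN]; omega)
    omega
  -- counting the requests served in a busy period
  have hcard : ∀ s, (∀ t, s < t → t ≤ t₂ + 1 → σ t ≠ none) →
      ((Finset.Ioc s (t₂ + 1)).image f).card = t₂ + 1 - s ∧
      (Finset.Ioc s (t₂ + 1)).image f ⊆ N t₂ := by
    intro s hs
    constructor
    · rw [Finset.card_image_of_injOn, Nat.card_Ioc]
      intro a ha b hb hab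
      simp only [Finset.coe_Ioc, Set.mem_Ioc] at ha hb
      have h1 := (hf a (by omega) (hs a ha.1 ha.2)).1
      have h2 := (hf b (by omega) (hs b hb.1 hb.2)).1
      rw [hab] at h1
      exact huniq _ _ _ h1 h2
    · intro ρ hρ
      obtain ⟨t, ht, rfl⟩ := Finset.mem_image.1 hρ
      rw [Finset.mem_Ioc] at ht
      have h1 := (hf t (by omega) (hs t ht.1 ht.2)).1.1
      simp only [N, Finset.mem_filter, Finset.mem_univ, true_and]
      omega
  by_cases hid : ∃ s, 1 ≤ s ∧ s ≤ t₂ + 1 ∧ σ s = none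
  · obtain ⟨s, ⟨hs1, hs2, hs3⟩, hmax⟩ : ∃ s, (1 ≤ s ∧ s ≤ t₂ + 1 ∧ σ s = none) ∧
        ∀ t, s < t → t ≤ t₂ + 1 → σ t ≠ none := by
      obtain ⟨a, ha1, ha2, ha3⟩ := hid
      let Q : ℕ → Prop := fun t => 1 ≤ t ∧ σ t = none
      have hq := Nat.findGreatest_spec (P := Q) ha2 ⟨ha1, ha3⟩
      refine ⟨Nat.findGreatest Q (t₂ + 1), ⟨hq.1, Nat.findGreatest_le _, hq.2⟩, ?_⟩
      intro t h1 h2 h3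
      exact Nat.findGreatest_is_greatest (P := Q) h1 h2 ⟨by omega, h3⟩
    rcases Nat.lt_or_ge t₂ s with hlt | hge
    · refine hidle s hs1 hs3 ρ0 ⟨by omega, fun t' ht' => hcon t' (by omega)⟩
    · obtain ⟨hc, hsub⟩ := hcard s hmax
      have hdisj : Disjoint (N (s - 1)) ((Finset.Ioc s (t₂ + 1)).image f) := by
        rw [Finset.disjoint_left]
        intro ρ hρ hρ'
        obtain ⟨t, ht, rfl⟩ := Finset.mem_image.1 hρ'
        rw [Finset.mem_Ioc] at ht
        simp only [N, Finset.mem_filter, Finset.mem_univ, true_and] at hρ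
        have h1 := (hf t (by omega) (hmax t ht.1 ht.2)).2
        exact hidle s hs1 hs3 (f t) ⟨by omega, fun t' ht' => h1.2 t' (by omega)⟩
      have hsub' : N (s - 1) ⊆ N t₂ := by
        intro ρ hρ
        simp only [N, Finset.mem_filter, Finset.mem_univ, true_and] at hρ ⊢
        omega
      have h2 := Finset.card_le_card (Finset.union_subset hsub' hsub)
      rw [Finset.card_union_of_disjoint hdisj, hc] at h2
      have h3 := hlow (s - 1) (by omega)
      omega
  · push Not at hid
    obtain ⟨hc, hsub⟩ := hcard 0 (fun t h1 h2 => hid t h1 h2)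
    have hmem : ρ0 ∈ N t₂ := by simp [N, hρ0]
    rw [← Finset.eq_of_subset_of_card_le hsub (by omega)] at hmem
    obtain ⟨t, ht, h⟩ := Finset.mem_image.1 hmem
    rw [Finset.mem_Ioc] at ht
    have h1 := (hf t ht.1 (hid t ht.1 ht.2)).1
    rw [h] at h1
    exact hcon t ht.2 h1
end
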